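/- arXiv:1912.12709 — 6 statements merged into one kernel-verified Lean document; each statement's English description precedes it below -/
import Mathlib

section
/- On the space Ultrafilter X with its Stone topology, the sets β𝓗 := {𝒰 : Ultrafilter X | ↑𝒰 ≤ 𝓗}, for 𝓗 a countably generated filter on X, form a base for the Gδ-topology: (a) for every countably generated filter 𝓗 on X the set β𝓗 is closed and is a Gδ set in the Stone topology; (b) every Gδ subset of Ultrafilter X is a union of sets of the form β𝓗 with 𝓗 a countably generated (proper) filter; consequently every open set of the topology generated by the Gδ sets of the Stone topology is such a union. -/
/-!
If `𝓗 = ⨅ n, 𝓟 (s n)`, then `β𝓗 = ⋂ n, β(s n)` is a countable intersection of clopen sets, which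
gives closedness and Gδ. Conversely, for an ultrafilter `𝒰` in a Gδ set `⋂ n, f n`, choose for
each `n` a basic clopen set `β(s n)` with `𝒰 ∈ β(s n) ⊆ f n`; then `𝓗 = ⨅ n, 𝓟 (s n)` satisfies
`𝒰 ∈ β𝓗 ⊆ ⋂ n, f n`, and `𝓗` is proper because the ultrafilter `𝒰` is finer. This local
neighbourhood property passes to finite intersections, because `β𝓗 ∩ β𝓚 = β(𝓗 ⊓ 𝓚)`, and to
arbitrary unions, hence to all open sets of the Gδ-topology.
-/

open Filter Set Topology

/-- `β𝓗`: the set of ultrafilters finer than the filter `𝓗`. -/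
def beta {X : Type*} (𝓗 : Filter X) : Set (Ultrafilter X) :=
  {𝒰 : Ultrafilter X | (𝒰 : Filter X) ≤ 𝓗}

theorem beta_iInf_principal {X ι : Type*} (s : ι → Set X) :
    beta (⨅ i, 𝓟 (s i)) = ⋂ i, {𝒰 : Ultrafilter X | s i ∈ 𝒰} := by
  ext 𝒰
  simp [beta]

/-- Every point of `A` lies in some `β𝓗 ⊆ A` with `𝓗` countably generated. -/
def IsBetaNhd {X : Type*} (A : Set (Ultrafilter X)) : Prop :=
  ∀ 𝒰 ∈ A, ∃ 𝓗 : Filter X, 𝓗.IsCountablyGenerated ∧ 𝒰 ∈ beta 𝓗 ∧ beta 𝓗 ⊆ A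

theorem IsBetaNhd.exists_eq_biUnion {X : Type*} {A : Set (Ultrafilter X)} (hA : IsBetaNhd A) :
    ∃ 𝔖 : Set (Filter X), (∀ 𝓗 ∈ 𝔖, 𝓗.IsCountablyGenerated ∧ 𝓗.NeBot) ∧
      A = ⋃ 𝓗 ∈ 𝔖, beta 𝓗 := by
  refine ⟨{𝓗 | (𝓗.IsCountablyGenerated ∧ 𝓗.NeBot) ∧ beta 𝓗 ⊆ A}, fun _ h => h.1, ?_⟩
  refine Subset.antisymm (fun 𝒰 h𝒰 => ?_) (iUnion₂_subset fun _ h => h.2)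
  obtain ⟨𝓗, hc, hmem, hsub⟩ := hA 𝒰 h𝒰
  exact mem_iUnion₂.2 ⟨𝓗, ⟨⟨hc, 𝒰.neBot.mono hmem⟩, hsub⟩, hmem⟩

theorem IsGδ.isBetaNhd {X : Type*} {A : Set (Ultrafilter X)} (hA : IsGδ A) : IsBetaNhd A := by
  obtain ⟨f, hf, rfl⟩ := hA.eq_iInter_nat
  intro 𝒰 h𝒰
  have key : ∀ n, ∃ s : Set X, s ∈ 𝒰 ∧ {𝒱 : Ultrafilter X | s ∈ 𝒱} ⊆ f n := by
    intro n
    obtain ⟨_, ⟨s, rfl⟩, hs, hsub⟩ :=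
      ultrafilterBasis_is_basis.exists_subset_of_mem_open (mem_iInter.1 h𝒰 n) (hf n)
    exact ⟨s, hs, hsub⟩
  choose s hs hsub using key
  refine ⟨⨅ n, 𝓟 (s n), isCountablyGenerated_seq s, ?_, ?_⟩ <;> rw [beta_iInf_principal]
  · exact mem_iInter.2 hs
  · exact iInter_mono hsub

theorem isBetaNhd_of_isOpen_generateFrom {X : Type*} {A : Set (Ultrafilter X)}
    (hA : IsOpen[TopologicalSpace.generateFrom {s : Set (Ultrafilter X) | IsGδ s}] A) :
    IsBetaNhd A := by
  change TopologicalSpace.GenerateOpen _ A at hA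
  induction hA with
  | basic s hs => exact IsGδ.isBetaNhd hs
  | univ => exact IsGδ.univ.isBetaNhd
  | inter s t _ _ ihs iht =>
    intro 𝒰 h𝒰
    obtain ⟨𝓗, hc, hmem, hsub⟩ := ihs 𝒰 h𝒰.1
    obtain ⟨𝓚, kc, kmem, ksub⟩ := iht 𝒰 h𝒰.2
    refine ⟨𝓗 ⊓ 𝓚, inferInstance, le_inf (c := (𝒰 : Filter X)) hmem kmem, fun 𝒱 h𝒱 => ?_⟩
    exact ⟨hsub (show (𝒱 : Filter X) ≤ 𝓗 from le_trans h𝒱 inf_le_left),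
      ksub (show (𝒱 : Filter X) ≤ 𝓚 from le_trans h𝒱 inf_le_right)⟩
  | sUnion S _ ih =>
    rintro 𝒰 ⟨s, hs, h𝒰⟩
    obtain ⟨𝓗, hc, hmem, hsub⟩ := ih s hs 𝒰 h𝒰
    exact ⟨𝓗, hc, hmem, hsub.trans (subset_sUnion_of_mem hs)⟩

/-- The sets `β𝓗` for `𝓗` countably generated form a base of the Gδ-topology of
the Stone space `Ultrafilter X`:
(a) every such `β𝓗` is closed and Gδ in the Stone topology;
(b) every Gδ subset of `Ultrafilter X` is a union of such sets with `𝓗`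
countably generated and proper;
(c) consequently every open set of the topology generated by the Gδ sets is such a union. -/
theorem betaCountablyGenerated_basis_Gdelta {X : Type*} :
    (∀ 𝓗 : Filter X, 𝓗.IsCountablyGenerated →
      IsClosed (beta 𝓗) ∧ IsGδ (beta 𝓗)) ∧
    (∀ A : Set (Ultrafilter X), IsGδ A →
      ∃ 𝔖 : Set (Filter X), (∀ 𝓗 ∈ 𝔖, 𝓗.IsCountablyGenerated ∧ 𝓗.NeBot) ∧
        A = ⋃ 𝓗 ∈ 𝔖, beta 𝓗) ∧
    (∀ A : Set (Ultrafilter X),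
      IsOpen[TopologicalSpace.generateFrom {s : Set (Ultrafilter X) | IsGδ s}] A →
      ∃ 𝔖 : Set (Filter X), (∀ 𝓗 ∈ 𝔖, 𝓗.IsCountablyGenerated ∧ 𝓗.NeBot) ∧
        A = ⋃ 𝓗 ∈ 𝔖, beta 𝓗) := by
  refine ⟨fun 𝓗 h𝓗 => ?_, fun A hA => hA.isBetaNhd.exists_eq_biUnion,
    fun A hA => (isBetaNhd_of_isOpen_generateFrom hA).exists_eq_biUnion⟩
  obtain ⟨s, hs⟩ := 𝓗.exists_antitone_basis
  rw [hs.toHasBasis.eq_iInf, beta_iInf_principal]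
  exact ⟨isClosed_iInter fun n => ultrafilter_isClosed_basic (s n),
    IsGδ.iInter_of_isOpen fun n => ultrafilter_isOpen_basic (s n)⟩
end

section
/- Let X be a regular Hausdorff (T3) topological space. Then: (i) X is bi-k if and only if for every convergent ultrafilter 𝒰 (i.e. ↑𝒰 ≤ 𝓝 x for some x) there is a countably generated compactoid filter 𝓗 with ↑𝒰 ≤ 𝓗; (ii) X is of pointwise countable type if and only if for every NeBot filter F convergent to some point (F ≤ 𝓝 x for some x) there is a countably generated compactoid filter 𝓗 with F ≤ 𝓗. -/
/-!
The filter `𝒪(K)` is `𝓝ˢ K`, which is compactoid when `K` is compact; since compactoidness passes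
to finer filters, this gives both forward implications.

For the converses, the key fact is that if a compactoid filter `𝓖` is regular, in the sense that
each member contains the closure of another member, then the limit of every ultrafilter finer than
`𝓖` lies in `ker 𝓖`. Hence `ker 𝓖` is compact and `𝓖 ≤ 𝓝ˢ (ker 𝓖)` (`compactoid_ker`).

* For (i), replace the given compactoid filter `𝓗` by the filter generated by the closures of its
  members. It has a countable base, it is regular, and it is still compactoid because `X` is
  regular (`CompactoidT.lift'_closure`).
* For (ii), apply the hypothesis to `𝓝 x`, so that `𝓗` has a countable base `Hₙ` of neighbourhoods
  of `x`. Choose open `Uₙ ∋ x` with `closure Uₙ₊₁ ⊆ Uₙ ∩ Hₙ`. The filter `𝓖` generated by the `Uₙ`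
  is regular and finer than `𝓗`, and `K = ker 𝓖` satisfies `𝓖 ≤ 𝓝ˢ K`; the reverse inequality holds
  as the `Uₙ` are open, so `𝓝ˢ K = 𝓖` is countably generated.
-/

open Filter Set Topology

/-- A filter on a topological space is compactoid if every finer ultrafilter converges. -/
def CompactoidT {X : Type*} [TopologicalSpace X] (𝓗 : Filter X) : Prop :=
  ∀ 𝒰 : Ultrafilter X, (𝒰 : Filter X) ≤ 𝓗 → ∃ x : X, (𝒰 : Filter X) ≤ 𝓝 x

/-- `𝒪(K)`: the filter generated by the open sets containing `K`. -/
def openNbhdFilter {X : Type*} [TopologicalSpace X] (K : Set X) : Filter X :=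
  ⨅ U ∈ {U : Set X | IsOpen U ∧ K ⊆ U}, 𝓟 U

theorem openNbhdFilter_eq {X : Type*} [TopologicalSpace X] (K : Set X) :
    openNbhdFilter K = 𝓝ˢ K := by
  apply le_antisymm
  · intro s hs
    obtain ⟨U, hU, hKU, hUs⟩ := mem_nhdsSet_iff_exists.1 hs
    have h : openNbhdFilter K ≤ 𝓟 U := iInf₂_le U (show IsOpen U ∧ K ⊆ U from ⟨hU, hKU⟩)
    exact mem_of_superset (h (mem_principal_self U)) hUs
  · refine le_iInf₂ fun U hU => ?_
    exact le_principal_iff.2 (hU.1.mem_nhdsSet.2 hU.2)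

theorem CompactoidT.mono {X : Type*} [TopologicalSpace X] {𝓖 𝓗 : Filter X}
    (h : CompactoidT 𝓗) (hle : 𝓖 ≤ 𝓗) : CompactoidT 𝓖 :=
  fun 𝒰 h𝒰 => h 𝒰 (h𝒰.trans hle)

theorem compactoid_nhdsSet {X : Type*} [TopologicalSpace X] {K : Set X} (hK : IsCompact K) :
    CompactoidT (𝓝ˢ K) := by
  intro 𝒰 h𝒰
  by_contra! hne
  have hdisj : Disjoint (𝓝ˢ K) (𝒰 : Filter X) := by
    refine hK.disjoint_nhdsSet_left.2 fun x _ => ?_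
    exact (Ultrafilter.disjoint_iff_not_le.2 (hne x)).symm
  exact 𝒰.neBot.ne (hdisj.symm.eq_bot_of_le h𝒰)

/-- A compactoid filter in which each member contains the closure of another member has a compact
kernel and contains every neighbourhood of that kernel. -/
theorem compactoid_ker {X : Type*} [TopologicalSpace X] {𝓖 : Filter X}
    (hc : CompactoidT 𝓖) (hr : ∀ s ∈ 𝓖, ∃ t ∈ 𝓖, closure t ⊆ s) :
    IsCompact 𝓖.ker ∧ 𝓖 ≤ 𝓝ˢ 𝓖.ker := by
  have key : ∀ 𝒰 : Ultrafilter X, (𝒰 : Filter X) ≤ 𝓖 → ∃ y ∈ 𝓖.ker, (𝒰 : Filter X) ≤ 𝓝 y := by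
    intro 𝒰 h𝒰
    obtain ⟨y, hy⟩ := hc 𝒰 h𝒰
    refine ⟨y, mem_ker.2 fun s hs => ?_, hy⟩
    obtain ⟨t, ht, hts⟩ := hr s hs
    exact hts (mem_closure_iff_ultrafilter.2 ⟨𝒰, h𝒰 ht, hy⟩)
  constructor
  · refine isCompact_iff_ultrafilter_le_nhds.2 fun 𝒰 h𝒰 => key 𝒰 (h𝒰.trans ?_)
    exact fun s hs => mem_principal.2 fun y hy => mem_ker.1 hy s hs
  · refine le_iff_ultrafilter.2 fun 𝒰 h𝒰 => ?_
    obtain ⟨y, hyK, hy⟩ := key 𝒰 h𝒰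
    exact hy.trans (nhds_le_nhdsSet hyK)

/-- In a regular space, the filter generated by the closures of the members of a compactoid filter
is compactoid. -/
theorem CompactoidT.lift'_closure {X : Type*} [TopologicalSpace X] [RegularSpace X]
    {𝓗 : Filter X} (hc : CompactoidT 𝓗) : CompactoidT (𝓗.lift' closure) := by
  intro 𝒱 h𝒱
  -- The open members of `𝒱` mesh with `𝓗`, so they all belong to one ultrafilter `𝒲 ≤ 𝓗`.
  have hbasis : (⨅ V ∈ {V : Set X | IsOpen V ∧ V ∈ 𝒱}, 𝓟 V).HasBasis
      (fun V => V ∈ {V : Set X | IsOpen V ∧ V ∈ 𝒱}) id := by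
    refine hasBasis_biInf_principal ?_ ⟨univ, isOpen_univ, univ_mem⟩
    intro V hV W hW
    exact ⟨V ∩ W, ⟨hV.1.inter hW.1, inter_mem hV.2 hW.2⟩, inter_subset_left, inter_subset_right⟩
  have hne : ((⨅ V ∈ {V : Set X | IsOpen V ∧ V ∈ 𝒱}, 𝓟 V) ⊓ 𝓗).NeBot := by
    refine (hbasis.inf_basis_neBot_iff 𝓗.basis_sets).2 fun {V} hV {H} hH => ?_
    obtain ⟨z, hzV, hzH⟩ := 𝒱.neBot.nonempty_of_mem
      (inter_mem hV.2 (h𝒱 (mem_lift' hH)))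
    exact mem_closure_iff.1 hzH V hV.1 hzV
  obtain ⟨𝒲, h𝒲⟩ := Ultrafilter.exists_le (h := hne)
  obtain ⟨y, hy⟩ := hc 𝒲 (h𝒲.trans inf_le_right)
  refine ⟨y, fun N hN => ?_⟩
  obtain ⟨C, hCy, hC, hCN⟩ := exists_mem_nhds_isClosed_subset hN
  refine mem_of_superset ?_ hCN
  by_contra hC𝒱
  have hCc : Cᶜ ∈ 𝒱 := Ultrafilter.compl_mem_iff_notMem.2 hC𝒱
  have hCw : Cᶜ ∈ 𝒲 := h𝒲 (mem_inf_of_left (hbasis.mem_of_mem (i := Cᶜ) ⟨hC.isOpen_compl, hCc⟩))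
  exact Ultrafilter.compl_mem_iff_notMem.1 hCw (hy hCy)

theorem isCountablyGenerated_lift'_closure {X : Type*} [TopologicalSpace X] (𝓗 : Filter X)
    [𝓗.IsCountablyGenerated] : (𝓗.lift' closure).IsCountablyGenerated := by
  obtain ⟨H, hH⟩ := 𝓗.exists_antitone_basis
  exact (hH.1.lift'_closure).isCountablyGenerated

/-- If `𝓝 x` is finer than a countably generated compactoid filter, then `x` lies in a compact set
of countable character. -/
theorem exists_compact_countable_character {X : Type*} [TopologicalSpace X] [RegularSpace X]
    {x : X} {𝓗 : Filter X} [𝓗.IsCountablyGenerated] (hc : CompactoidT 𝓗) (hx : 𝓝 x ≤ 𝓗) :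
    ∃ K : Set X, IsCompact K ∧ x ∈ K ∧ (𝓝ˢ K).IsCountablyGenerated := by
  obtain ⟨H, hH⟩ := 𝓗.exists_antitone_basis
  have step : ∀ (n : ℕ) (U : {U : Set X // IsOpen U ∧ x ∈ U}),
      ∃ V : {V : Set X // IsOpen V ∧ x ∈ V}, closure V.1 ⊆ U.1 ∩ H n := by
    rintro n ⟨U, hU, hxU⟩
    obtain ⟨C, hCx, hC, hCs⟩ := exists_mem_nhds_isClosed_subset
      (inter_mem (hU.mem_nhds hxU) (hx (hH.1.mem_of_mem (i := n) trivial)))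
    exact ⟨⟨interior C, isOpen_interior, mem_interior_iff_mem_nhds.2 hCx⟩,
      (closure_minimal interior_subset hC).trans hCs⟩
  choose f hf using step
  let U : ℕ → {U : Set X // IsOpen U ∧ x ∈ U} :=
    fun n => Nat.rec ⟨univ, isOpen_univ, mem_univ x⟩ f n
  have hU : ∀ n, closure (U (n + 1)).1 ⊆ (U n).1 ∩ H n := fun n => hf n (U n)
  have hanti : Antitone fun n => (U n).1 :=
    antitone_nat_of_succ_le fun n => subset_closure.trans ((hU n).trans inter_subset_left)
  have hG : (⨅ n, 𝓟 (U n).1).HasAntitoneBasis fun n => (U n).1 :=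
    HasAntitoneBasis.iInf_principal hanti
  set 𝓖 : Filter X := ⨅ n, 𝓟 (U n).1
  have hUmem : ∀ n, (U n).1 ∈ 𝓖 := fun n => hG.1.mem_of_mem trivial
  have hle : 𝓖 ≤ 𝓗 := by
    refine hH.1.ge_iff.2 fun n _ => mem_of_superset (hUmem (n + 1)) ?_
    exact subset_closure.trans ((hU n).trans inter_subset_right)
  obtain ⟨hK, hKle⟩ := compactoid_ker (hc.mono hle) fun s hs => by
    obtain ⟨n, -, hn⟩ := hG.1.mem_iff.1 hs
    exact ⟨_, hUmem (n + 1), (hU n).trans (inter_subset_left.trans hn)⟩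
  have heq : 𝓝ˢ 𝓖.ker = 𝓖 := by
    refine le_antisymm (hG.1.ge_iff.2 fun n _ => ?_) hKle
    exact (U n).2.1.mem_nhdsSet.2 fun y hy => mem_ker.1 hy _ (hUmem n)
  refine ⟨𝓖.ker, hK, mem_ker.2 fun s hs => ?_, heq.symm ▸ hG.1.isCountablyGenerated⟩
  obtain ⟨n, -, hn⟩ := hG.1.mem_iff.1 hs
  exact hn (U n).2.2

/-- For a regular Hausdorff topological space:
(i) bi-k ↔ every convergent ultrafilter contains a countably based compactoid filter;
(ii) pointwise countable type ↔ every convergent filter contains a countably based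
compactoid filter. -/
theorem bik_and_pointwiseCountableType {X : Type*} [TopologicalSpace X] [T3Space X] :
    ((∀ (x : X) (𝒰 : Ultrafilter X), (𝒰 : Filter X) ≤ 𝓝 x →
        ∃ K : Set X, IsCompact K ∧ ∃ 𝓗 : Filter X, 𝓗.IsCountablyGenerated ∧
          Filter.ker 𝓗 = K ∧ (𝒰 : Filter X) ≤ 𝓗 ∧ 𝓗 ≤ openNbhdFilter K) ↔
      (∀ 𝒰 : Ultrafilter X, (∃ x : X, (𝒰 : Filter X) ≤ 𝓝 x) →
        ∃ 𝓗 : Filter X, 𝓗.IsCountablyGenerated ∧ CompactoidT 𝓗 ∧ (𝒰 : Filter X) ≤ 𝓗)) ∧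
    ((∀ x : X, ∃ K : Set X, IsCompact K ∧ x ∈ K ∧
        (openNbhdFilter K).IsCountablyGenerated) ↔
      (∀ F : Filter X, F.NeBot → (∃ x : X, F ≤ 𝓝 x) →
        ∃ 𝓗 : Filter X, 𝓗.IsCountablyGenerated ∧ CompactoidT 𝓗 ∧ F ≤ 𝓗)) := by
  simp only [openNbhdFilter_eq]
  refine ⟨⟨?_, ?_⟩, ⟨?_, ?_⟩⟩
  · rintro h 𝒰 ⟨x, hx⟩
    obtain ⟨K, hK, 𝓗, hcg, -, h𝒰, hle⟩ := h x 𝒰 hx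
    exact ⟨𝓗, hcg, (compactoid_nhdsSet hK).mono hle, h𝒰⟩
  · intro h x 𝒰 hx
    obtain ⟨𝓗, hcg, hc, h𝒰⟩ := h 𝒰 ⟨x, hx⟩
    obtain ⟨hK, hle⟩ := compactoid_ker hc.lift'_closure fun s hs => by
      obtain ⟨t, ht, hts⟩ := 𝓗.basis_sets.lift'_closure.mem_iff.1 hs
      exact ⟨closure t, mem_lift' ht, isClosed_closure.closure_eq.trans_subset hts⟩
    exact ⟨_, hK, 𝓗.lift' closure, isCountablyGenerated_lift'_closure 𝓗, rfl,
      h𝒰.trans 𝓗.le_lift'_closure, hle⟩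
  · rintro h F - ⟨x, hx⟩
    obtain ⟨K, hK, hxK, hcg⟩ := h x
    exact ⟨𝓝ˢ K, hcg, compactoid_nhdsSet hK, hx.trans (nhds_le_nhdsSet hxK)⟩
  · intro h x
    obtain ⟨𝓗, hcg, hc, hx⟩ := h (𝓝 x) inferInstance ⟨x, le_rfl⟩
    exact exists_compact_countable_character hc hx
end

section
/- There exist a type X and a subset S of Ultrafilter X such that: S is closed in the Gδ-topology of Ultrafilter X (the topology generated by the Gδ sets of the Stone topology), S is not closed in the Stone topology, and for every Fσ subset C of S (C a countable union of Stone-closed sets with C ⊆ S), the Stone closure of C differs from the Stone closure of S. -/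
/-!
Take `X = ℕ → Bool` and let `S` be the set of principal ultrafilters.

* `S` is closed in the Gδ-topology because no nonprincipal ultrafilter `u` on `ℕ → Bool` is
  countably complete: the coordinatewise `u`-limit `x` satisfies `{y | y n = x n} ∈ u` for every
  `n`, so `u` lies in a Gδ set containing at most one principal ultrafilter, namely `pure x`, and
  that one is removed by intersecting with the clopen set given by `{x}ᶜ`.
* A Stone-closed set of principal ultrafilters is finite (`finite_of_isClosed_subset_range_pure`),
  so an Fσ subset `C` of `S` is supported on a countable set `A`. The closure of `C` then stays
  in the clopen set of ultrafilters containing `A`, and misses `pure x` for `x ∉ A`, which exists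
  since `X` is uncountable.
* `S` is not closed, since otherwise `S` would be an Fσ subset of itself.
-/

open Filter Set Topology

/-- An ultrafilter containing `A` lies in the Stone closure of the points of `A`. -/
lemma mem_of_isClosed_of_pure_mem {X : Type*} {K : Set (Ultrafilter X)} (hK : IsClosed K)
    {A : Set X} (hA : ∀ x ∈ A, (pure x : Ultrafilter X) ∈ K) {u : Ultrafilter X} (hu : A ∈ u) :
    u ∈ K := by
  by_contra h
  obtain ⟨t, ⟨s, rfl⟩, hus, hsK⟩ :=
    ultrafilterBasis_is_basis.exists_subset_of_mem_open (show u ∈ Kᶜ from h) hK.isOpen_compl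
  obtain ⟨x, hxs, hxA⟩ := u.nonempty_of_mem (inter_mem (show s ∈ u from hus) hu)
  exact hsK (show s ∈ (pure x : Ultrafilter X) from hxs) (hA x hxA)

lemma finite_of_isClosed_subset_range_pure {X : Type*} {K : Set (Ultrafilter X)}
    (hK : IsClosed K) (hS : K ⊆ range (pure : X → Ultrafilter X)) :
    {x : X | (pure x : Ultrafilter X) ∈ K}.Finite := by
  by_contra hinf
  have : NeBot (cofinite ⊓ 𝓟 {x : X | (pure x : Ultrafilter X) ∈ K}) :=
    Set.Infinite.cofinite_inf_principal_neBot hinf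
  -- A nonprincipal ultrafilter concentrated on the support of `K` would belong to `K`.
  let u := Ultrafilter.of (cofinite ⊓ 𝓟 {x : X | (pure x : Ultrafilter X) ∈ K})
  have hu : (u : Filter X) ≤ cofinite ⊓ 𝓟 {x : X | (pure x : Ultrafilter X) ∈ K} :=
    Ultrafilter.of_le _
  have huK : u ∈ K := mem_of_isClosed_of_pure_mem hK (fun _ hx => hx)
    (hu (mem_inf_of_right (mem_principal_self _)))
  obtain ⟨x, hx⟩ := hS huK
  have h1 : ({x}ᶜ : Set X) ∈ u :=
    hu (mem_inf_of_left (Set.finite_singleton x).compl_mem_cofinite)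
  rw [← hx] at h1
  exact h1 rfl

lemma exists_isGδ_disjoint_range_pure {u : Ultrafilter (ℕ → Bool)}
    (hu : u ∉ range (pure : (ℕ → Bool) → Ultrafilter (ℕ → Bool))) :
    ∃ G : Set (Ultrafilter (ℕ → Bool)), IsGδ G ∧ u ∈ G ∧ G ⊆ (range pure)ᶜ := by
  have hx : ∀ n, ∃ b : Bool, {y : ℕ → Bool | y n = b} ∈ u := by
    intro n
    rcases u.mem_or_compl_mem {y : ℕ → Bool | y n = true} with h | h
    · exact ⟨true, h⟩
    · refine ⟨false, ?_⟩
      convert h using 1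
      ext y
      simp
  choose x hx using hx
  refine ⟨(⋂ n, {v | {y : ℕ → Bool | y n = x n} ∈ v}) ∩ {v | ({x}ᶜ : Set (ℕ → Bool)) ∈ v},
    (IsGδ.iInter_of_isOpen fun n => ultrafilter_isOpen_basic _).inter
      (ultrafilter_isOpen_basic _).isGδ, ⟨mem_iInter.2 hx, ?_⟩, ?_⟩
  · refine Ultrafilter.compl_mem_iff_notMem.2 fun h => hu ⟨x, ?_⟩
    exact (Ultrafilter.eq_of_le (le_pure_iff.2 h)).symm
  · rintro _ ⟨h1, h2⟩ ⟨z, rfl⟩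
    exact h2 (funext fun n => mem_iInter.1 h1 n)

/-- An Fσ set of principal ultrafilters on an uncountable type is not dense among them. -/
lemma closure_iUnion_ne_closure_range_pure {X : Type*} [Uncountable X]
    {f : ℕ → Set (Ultrafilter X)} (hf : ∀ n, IsClosed (f n))
    (hS : (⋃ n, f n) ⊆ range (pure : X → Ultrafilter X)) :
    closure (⋃ n, f n) ≠ closure (range (pure : X → Ultrafilter X)) := by
  intro heq
  set A : Set X := ⋃ n, {x : X | (pure x : Ultrafilter X) ∈ f n} with hA
  have hAc : A.Countable := countable_iUnion fun n =>
    (finite_of_isClosed_subset_range_pure (hf n) ((subset_iUnion f n).trans hS)).countable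
  obtain ⟨x, hxA⟩ : ∃ x, x ∉ A := by
    by_contra! h
    exact not_countable_univ ((eq_univ_of_forall h) ▸ hAc)
  have hcl : closure (⋃ n, f n) ⊆ {v | A ∈ v} := by
    refine closure_minimal (fun v hv => ?_) (ultrafilter_isClosed_basic A)
    obtain ⟨y, rfl⟩ := hS hv
    obtain ⟨n, hn⟩ := mem_iUnion.1 hv
    exact show y ∈ A from mem_iUnion.2 ⟨n, hn⟩
  exact hxA (hcl (heq ▸ subset_closure (mem_range_self x)))

/-- There are a set `X` and a δ-closed, non-closed subset `S` of `Ultrafilter X`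
such that no Fσ subset of `S` has the same Stone closure as `S`. -/
theorem exists_deltaClosed_not_closure_of_Fsigma :
    ∃ (X : Type) (S : Set (Ultrafilter X)),
      IsClosed[TopologicalSpace.generateFrom {s : Set (Ultrafilter X) | IsGδ s}] S ∧
      ¬ IsClosed S ∧
      ∀ C : Set (Ultrafilter X), C ⊆ S →
        (∃ f : ℕ → Set (Ultrafilter X), (∀ n, IsClosed (f n)) ∧ C = ⋃ n, f n) →
        closure C ≠ closure S := by
  have : Uncountable (ℕ → Bool) := by
    rw [← Cardinal.aleph0_lt_mk_iff]
    simpa using Cardinal.cantor Cardinal.aleph0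
  have key : ∀ C : Set (Ultrafilter (ℕ → Bool)), C ⊆ range pure →
      (∃ f : ℕ → Set (Ultrafilter (ℕ → Bool)), (∀ n, IsClosed (f n)) ∧ C = ⋃ n, f n) →
      closure C ≠ closure (range pure) := by
    rintro _ hC ⟨f, hf, rfl⟩
    exact closure_iUnion_ne_closure_range_pure hf hC
  refine ⟨ℕ → Bool, range pure, ?_, ?_, key⟩
  · refine (@isOpen_compl_iff _ _ (TopologicalSpace.generateFrom _)).1 ?_
    refine (@isOpen_iff_forall_mem_open _ (TopologicalSpace.generateFrom _) _).2 ?_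
    intro u hu
    obtain ⟨G, hG, huG, hGS⟩ := exists_isGδ_disjoint_range_pure hu
    exact ⟨G, hGS, TopologicalSpace.isOpen_generateFrom_of_mem hG, huG⟩
  · intro h
    exact key _ Subset.rfl ⟨fun _ => range pure, fun _ => h, (iUnion_const _).symm⟩ rfl
end

section
/- There exist a type X and a set S of free ultrafilters on X (S ⊆ {𝒰 : Ultrafilter X | ∀ x, 𝒰 ≠ pure x}) such that S is Lindelöf but not σ-compact in the Stone topology of Ultrafilter X. -/
/-!
The set `S` consists of the free ultrafilters on `X = ℕ → ℕ` that converge in the Baire space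
topology of `X`.

`S` is Lindelöf because `X` is, and because the free ultrafilters form a compact set: a filter on `S`
with the countable intersection property is pushed forward to `X` by choosing a limit of each
ultrafilter, and clusters there at some `y`; restricting it to the ultrafilters whose limit
is near `y`, compactness of `Ultrafilter X` gives a cluster point, which is again free and
converges to `y`.

`S` is not σ-compact by the diagonal argument showing that `X` is not: on a compact `K ⊆ S` the `n`-th
coordinate of the limit is bounded, so if `S = ⋃ n, K n`, with bound `b n` for the `n`-th coordinate
on `K n`, then a free ultrafilter converging to `n ↦ b n + 1` lies in no `K n`.
-/

open Filter Set Topology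

/-- In a Lindelöf space, the free convergent ultrafilters form a Lindelöf set. -/
lemma isLindelof_free_convergent {X : Type} [TopologicalSpace X] [LindelofSpace X] :
    IsLindelof {𝒰 : Ultrafilter X | (∀ x, 𝒰 ≠ pure x) ∧ ∃ y, (𝒰 : Filter X) ≤ 𝓝 y} := by
  intro f _ _ hf
  have hS := le_principal_iff.1 hf
  obtain ⟨𝒱₀, hV₀⟩ := Filter.nonempty_of_mem hS
  obtain ⟨y₀, -⟩ := hV₀.2
  have hL : ∀ 𝒰 : Ultrafilter X, ∃ y, (∃ z, (𝒰 : Filter X) ≤ 𝓝 z) → (𝒰 : Filter X) ≤ 𝓝 y := by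
    intro 𝒰
    by_cases h : ∃ z, (𝒰 : Filter X) ≤ 𝓝 z
    · exact ⟨h.choose, fun _ => h.choose_spec⟩
    · exact ⟨y₀, fun h' => absurd h' h⟩
  choose L hL using hL
  obtain ⟨y, -, hy⟩ := (isLindelof_univ (X := X)) (f := map L f) (by simp)
  have hg : NeBot (f ⊓ comap L (𝓝 y)) := by
    have : NeBot (map L (f ⊓ comap L (𝓝 y))) := by
      rw [Filter.push_pull, inf_comm]
      exact hy
    exact this.of_map
  obtain ⟨𝒰, -, hU⟩ := isCompact_univ (X := Ultrafilter X) (f := f ⊓ comap L (𝓝 y)) (by simp)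
  -- A cluster point lies in every closed set that belongs to the filter.
  have key : ∀ C : Set (Ultrafilter X), IsClosed C → C ∈ f ⊓ comap L (𝓝 y) → 𝒰 ∈ C :=
    fun C hC hmem => hC.closure_subset (hU.mem_closure_of_mem _ hmem)
  refine ⟨𝒰, ⟨fun x hx => ?_, y, ?_⟩, hU.mono inf_le_left⟩
  · -- `𝒰 = pure x` means `{x} ∈ 𝒰`, and `{x}ᶜ` belongs to every free ultrafilter.
    have h := key {𝒱 | ({x}ᶜ : Set X) ∈ 𝒱} (ultrafilter_isClosed_basic _) (by
      refine mem_inf_of_left (mem_of_superset hS fun 𝒱 h𝒱 => ?_)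
      refine Ultrafilter.compl_mem_iff_notMem.2 fun hx => h𝒱.1 x ?_
      exact Ultrafilter.coe_injective
        (Ultrafilter.unique (pure x) (by simpa using hx)))
    rw [hx] at h
    exact h rfl
  · intro V hV
    obtain ⟨W, hWV, hW, hyW⟩ := mem_nhds_iff.1 hV
    refine mem_of_superset ?_ hWV
    refine key {𝒱 | W ∈ 𝒱} (ultrafilter_isClosed_basic _) ?_
    filter_upwards [mem_inf_of_left hS,
      mem_inf_of_right (preimage_mem_comap (hW.mem_nhds hyW))] with 𝒱 h𝒱 hLW
    exact hL 𝒱 h𝒱.2 (hW.mem_nhds hLW)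

/-- Every point of the Baire space is the limit of a free ultrafilter. -/
lemma exists_free_le_nhds (y : ℕ → ℕ) :
    ∃ 𝒰 : Ultrafilter (ℕ → ℕ), (∀ x, 𝒰 ≠ pure x) ∧ (𝒰 : Filter (ℕ → ℕ)) ≤ 𝓝 y := by
  -- The points `e k`, equal to `y` except at `k`, are distinct and converge to `y`.
  let e : ℕ → ℕ → ℕ := fun k => Function.update y k (y k + 1)
  have he : Function.Injective e := by
    intro k l hkl
    by_contra hne
    have := congrFun hkl k
    simp [e, Function.update_of_ne hne] at this
  refine ⟨(hyperfilter ℕ).map e, fun x hx => ?_, ?_⟩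
  · have h : ({x} : Set (ℕ → ℕ)) ∈ (hyperfilter ℕ).map e := by
      rw [hx]; exact rfl
    exact notMem_hyperfilter_of_finite
      ((finite_singleton x).preimage he.injOn) (Ultrafilter.mem_map.1 h)
  · have ht : Tendsto e cofinite (𝓝 y) := by
      refine tendsto_pi_nhds.2 fun n => tendsto_nhds_of_eventually_eq ?_
      filter_upwards [(finite_singleton n).compl_mem_cofinite] with k hk
      exact Function.update_of_ne (fun h => hk h.symm) _ _
    exact (map_mono hyperfilter_le_cofinite).trans ht

/-- On a compact set of convergent ultrafilters, each coordinate is uniformly bounded. -/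
lemma exists_coord_bound {K : Set (Ultrafilter (ℕ → ℕ))} (hK : IsCompact K)
    (hc : ∀ 𝒰 ∈ K, ∃ y, (𝒰 : Filter (ℕ → ℕ)) ≤ 𝓝 y) (n : ℕ) :
    ∃ m, ∀ 𝒰 ∈ K, {x : ℕ → ℕ | x n ≤ m} ∈ 𝒰 := by
  obtain ⟨m, hm⟩ := hK.elim_directed_cover
    (fun m : ℕ => {𝒰 : Ultrafilter (ℕ → ℕ) | {x : ℕ → ℕ | x n ≤ m} ∈ 𝒰})
    (fun m => ultrafilter_isOpen_basic _)
    (fun 𝒰 h𝒰 => by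
      obtain ⟨y, hy⟩ := hc 𝒰 h𝒰
      refine mem_iUnion.2 ⟨y n, hy ?_⟩
      exact (continuous_apply n).continuousAt.preimage_mem_nhds
        ((isOpen_discrete (Iic (y n))).mem_nhds (le_refl (y n))))
    (Monotone.directed_le fun a b hab 𝒰 h =>
      mem_of_superset (f := (𝒰 : Filter (ℕ → ℕ))) h fun x (hx : x n ≤ a) => hx.trans hab)
  exact ⟨m, fun 𝒰 h => hm h⟩

/-- There are a set `X` and a set `S` of free ultrafilters on `X` that is Lindelöf
but not σ-compact in the Stone topology of `Ultrafilter X`. -/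
theorem exists_lindelof_not_sigmaCompact_free_ultrafilters :
    ∃ (X : Type) (S : Set (Ultrafilter X)),
      S ⊆ {𝒰 : Ultrafilter X | ∀ x : X, 𝒰 ≠ pure x} ∧
      IsLindelof S ∧ ¬ IsSigmaCompact S := by
  refine ⟨ℕ → ℕ, {𝒰 | (∀ x, 𝒰 ≠ pure x) ∧ ∃ y, (𝒰 : Filter (ℕ → ℕ)) ≤ 𝓝 y},
    fun 𝒰 h => h.1, isLindelof_free_convergent, ?_⟩
  rintro ⟨K, hK, hKS⟩
  have hb := fun n => exists_coord_bound (hK n)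
    (fun 𝒰 h => (hKS.subset (mem_iUnion.2 ⟨n, h⟩)).2) n
  choose b hb using hb
  obtain ⟨𝒰, hfree, hlim⟩ := exists_free_le_nhds fun n => b n + 1
  obtain ⟨n, hn⟩ := mem_iUnion.1 (hKS.symm.subset ⟨hfree, _, hlim⟩)
  have hopen : IsOpen {x : ℕ → ℕ | x n = b n + 1} :=
    (isOpen_discrete ({b n + 1} : Set ℕ)).preimage
      (continuous_apply n : Continuous fun x : ℕ → ℕ => x n)
  have h1 : {x : ℕ → ℕ | x n = b n + 1} ∈ (𝒰 : Filter (ℕ → ℕ)) :=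
    hlim (hopen.mem_nhds (by simp))
  obtain ⟨x, hx1, hx2⟩ := 𝒰.neBot.nonempty_of_mem (inter_mem h1 (hb n 𝒰 hn))
  simp only [mem_ofPred_eq] at hx1 hx2
  omega
end

section
/- There exist a type X and a set S of free ultrafilters on X (S ⊆ {𝒰 : Ultrafilter X | ∀ x, 𝒰 ≠ pure x}) such that S is closed in the Gδ-topology of Ultrafilter X but S is not Lindelöf in the Stone topology. -/
/-!
Take `X = (ℕ → Bool) × ℕ`, viewed as continuum many disjoint columns `{i} × ℕ`, and let `S` be the
set of free ultrafilters that contain some column.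

* `S` is not Lindelöf: the clopen sets `β({i} × ℕ)` are disjoint, cover `S`, and each meets `S`,
  because every column carries a free ultrafilter; there are uncountably many of them.
* `S` is δ-closed: a principal ultrafilter `pure x` is isolated by `β{x}`. If `q` contains no column,
  let `b n` be the value of the `n`-th bit of the first coordinate that `q` selects. The Gδ set of
  ultrafilters that select every bit of `b` but omit the column of `b` contains `q` and misses `S`,
  since a column `i` is compatible with all selected bits only if `i = b`. (This is the argument
  that the continuum is not a measurable cardinal.)
-/

open Filter Set Topology

/-- The free ultrafilters on `(ℕ → Bool) × ℕ` that contain one of the columns `{i} × ℕ`. -/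
def columnFree : Set (Ultrafilter ((ℕ → Bool) × ℕ)) :=
  {q | (∀ x, q ≠ pure x) ∧ ∃ i : ℕ → Bool, Prod.fst ⁻¹' {i} ∈ q}

/-- Outside `columnFree`, every ultrafilter has a Gδ neighbourhood that misses `columnFree`. -/
lemma exists_isGδ_subset_compl_columnFree {q : Ultrafilter ((ℕ → Bool) × ℕ)}
    (hq : q ∉ columnFree) : ∃ G, IsGδ G ∧ q ∈ G ∧ G ⊆ columnFreeᶜ := by
  by_cases hfree : ∀ x, q ≠ pure x
  · have hcol : ∀ i : ℕ → Bool, Prod.fst ⁻¹' {i} ∉ q := fun i hi => hq ⟨hfree, i, hi⟩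
    have hbit : ∀ n, ∃ c : Bool, {x : (ℕ → Bool) × ℕ | x.1 n = c} ∈ q := by
      intro n
      rcases q.mem_or_compl_mem {x : (ℕ → Bool) × ℕ | x.1 n = true} with h | h
      · exact ⟨true, h⟩
      · refine ⟨false, mem_of_superset h fun x hx => ?_⟩
        simpa using hx
    choose b hb using hbit
    refine ⟨(⋂ n, {r : Ultrafilter ((ℕ → Bool) × ℕ) | {x | x.1 n = b n} ∈ r}) ∩
      {r | (Prod.fst ⁻¹' {b})ᶜ ∈ r}, ?_, ?_, ?_⟩
    · exact (IsGδ.iInter_of_isOpen fun n => ultrafilter_isOpen_basic _).inter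
        (ultrafilter_isOpen_basic _).isGδ
    · exact ⟨mem_iInter.2 hb, Ultrafilter.compl_mem_iff_notMem.2 (hcol b)⟩
    · rintro r ⟨hr, hrb⟩ ⟨-, i, hi⟩
      have hib : i = b := by
        funext n
        obtain ⟨x, hx, hxi⟩ := r.nonempty_of_mem (inter_mem (mem_iInter.1 hr n) hi)
        rw [← show x.1 = i from hxi]
        exact hx
      subst hib
      exact Ultrafilter.compl_mem_iff_notMem.1 hrb hi
  · push Not at hfree
    obtain ⟨x, rfl⟩ := hfree
    refine ⟨{r | {x} ∈ r}, (ultrafilter_isOpen_basic _).isGδ, Ultrafilter.mem_pure.2 rfl, ?_⟩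
    rintro r hr ⟨hrfree, -⟩
    exact hrfree x (Ultrafilter.coe_le_coe.1 (le_pure_iff.2 hr))

/-- Every column carries a free ultrafilter. -/
lemma exists_mem_columnFree (i : ℕ → Bool) : ∃ q ∈ columnFree, Prod.fst ⁻¹' {i} ∈ q := by
  have hi : Prod.fst ⁻¹' {i} ∈ (hyperfilter ℕ).map (fun n => (i, n)) := by
    rw [Ultrafilter.mem_map]
    exact Filter.univ_mem' fun n => rfl
  refine ⟨_, ⟨fun x hx => ?_, i, hi⟩, hi⟩
  have hmem : {x} ∈ (hyperfilter ℕ).map (fun n => (i, n)) := hx ▸ Ultrafilter.mem_pure.2 rfl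
  rw [Ultrafilter.mem_map] at hmem
  refine notMem_hyperfilter_of_finite (?_ : ((fun n => (i, n)) ⁻¹' {x}).Finite) hmem
  exact (finite_singleton x).preimage (fun _ _ _ _ h => (Prod.mk.inj h).2)

lemma not_isLindelof_columnFree : ¬ IsLindelof columnFree := by
  intro h
  obtain ⟨t, ht, hcov⟩ := h.elim_countable_subcover
    (fun i : ℕ → Bool => {r : Ultrafilter ((ℕ → Bool) × ℕ) | Prod.fst ⁻¹' {i} ∈ r})
    (fun i => ultrafilter_isOpen_basic _) (fun q hq => mem_iUnion.2 hq.2)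
  have htu : t = univ := by
    refine eq_univ_of_forall fun i => ?_
    obtain ⟨q, hq, hi⟩ := exists_mem_columnFree i
    obtain ⟨j, hj, hqj⟩ := mem_iUnion₂.1 (hcov hq)
    obtain ⟨x, hxi, hxj⟩ := q.nonempty_of_mem (inter_mem hi hqj)
    rwa [← show x.1 = i from hxi, show x.1 = j from hxj]
  rw [htu, countable_univ_iff] at ht
  have hcard := Cardinal.mk_le_aleph0_iff.2 ht
  rw [Cardinal.mk_arrow] at hcard
  exact Cardinal.aleph0_lt_continuum.not_ge (by simpa using hcard)

/-- There are a set `X` and a set `S` of free ultrafilters on `X` that is closed in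
the Gδ-topology of `Ultrafilter X` but not Lindelöf in the Stone topology. -/
theorem exists_deltaClosed_not_lindelof_free_ultrafilters :
    ∃ (X : Type) (S : Set (Ultrafilter X)),
      S ⊆ {𝒰 : Ultrafilter X | ∀ x : X, 𝒰 ≠ pure x} ∧
      IsClosed[TopologicalSpace.generateFrom {s : Set (Ultrafilter X) | IsGδ s}] S ∧
      ¬ IsLindelof S := by
  refine ⟨(ℕ → Bool) × ℕ, columnFree, fun q hq => hq.1, ?_, not_isLindelof_columnFree⟩
  have hopen : IsOpen[TopologicalSpace.generateFrom
      {s : Set (Ultrafilter ((ℕ → Bool) × ℕ)) | IsGδ s}] columnFreeᶜ := by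
    have hunion : columnFreeᶜ = ⋃₀ {G | IsGδ G ∧ G ⊆ columnFreeᶜ} := by
      refine Subset.antisymm (fun q hq => ?_) (sUnion_subset fun G hG => hG.2)
      obtain ⟨G, hG, hqG, hGS⟩ := exists_isGδ_subset_compl_columnFree hq
      exact ⟨G, ⟨hG, hGS⟩, hqG⟩
    rw [hunion]
    exact TopologicalSpace.GenerateOpen.sUnion _ fun G hG =>
      TopologicalSpace.GenerateOpen.basic G hG.1
  exact @IsClosed.mk _ (TopologicalSpace.generateFrom {s | IsGδ s}) _ hopen
end

section
/- Let X be a regular Hausdorff (T3) topological space. Then X is hemicompact if and only if the set 𝕌_conv := {𝒰 : Ultrafilter X | ∃ x, ↑𝒰 ≤ 𝓝 x} of convergent ultrafilters is hemicompact as a subset of Ultrafilter X with the Stone topology, i.e. there is a sequence (Kₙ) of compact subsets of 𝕌_conv such that every compact subset of Ultrafilter X contained in 𝕌_conv is contained in some Kₙ. -/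
/-!
Compact subsets of `X` and compact sets of convergent ultrafilters are exchanged by the
two monotone operations

* `C ↦ {𝒰 | 𝒰 converges to a point of C}` (`isCompact_convergentTo`), and
* `L ↦ {x | some 𝒰 ∈ L converges to x}` (`isCompact_limits`).

The first preserves compactness because, for `C` compact, an ultrafilter converges to a point of
`C` iff it contains every neighbourhood of `C`, which is a closed condition in the Stone topology.
The second preserves compactness because, `X` being regular Hausdorff, the limit map on convergent
ultrafilters is well defined and continuous.
Every convergent `𝒰 ∈ L` converges to a point of the limit set of `L`, and every `x ∈ C` is the limit
of the principal ultrafilter at `x`, so each operation carries a cofinal sequence of compact sets to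
a cofinal sequence of compact sets.
-/

open Filter Set Topology

/-- An ultrafilter converges to a point of a compact set `C` iff it refines the neighbourhood
filter of `C`; otherwise finitely many open sets outside the ultrafilter would cover `C`. -/
lemma exists_le_nhds_iff_le_nhdsSet {X : Type*} [TopologicalSpace X] {C : Set X}
    (hC : IsCompact C) (𝒰 : Ultrafilter X) :
    (∃ x ∈ C, (𝒰 : Filter X) ≤ 𝓝 x) ↔ (𝒰 : Filter X) ≤ 𝓝ˢ C := by
  constructor
  · rintro ⟨x, hx, h⟩
    exact h.trans (nhds_le_nhdsSet hx)
  · intro h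
    by_contra! hn
    have key : ∀ x ∈ C, ∃ V ∈ 𝓝 x, V ∉ 𝒰 := fun x hx => by
      simpa [Filter.le_def] using hn x hx
    choose! V hV hVU using key
    obtain ⟨t, htC, ht⟩ := hC.elim_nhds_subcover (fun x => interior (V x))
      (fun x hx => interior_mem_nhds.2 (hV x hx))
    have hmem : (⋃ x ∈ t, interior (V x)) ∈ 𝒰 :=
      h ((isOpen_biUnion fun x _ => isOpen_interior).mem_nhdsSet.2 ht)
    obtain ⟨x, hx, hxU⟩ := (Ultrafilter.finite_biUnion_mem_iff t.finite_toSet).1 hmem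
    exact hVU x (htC x hx) (mem_of_superset hxU interior_subset)

lemma isCompact_convergentTo {X : Type*} [TopologicalSpace X] {C : Set X} (hC : IsCompact C) :
    IsCompact {𝒰 : Ultrafilter X | ∃ x ∈ C, (𝒰 : Filter X) ≤ 𝓝 x} := by
  have : {𝒰 : Ultrafilter X | ∃ x ∈ C, (𝒰 : Filter X) ≤ 𝓝 x} =
      ⋂ V ∈ 𝓝ˢ C, {𝒰 : Ultrafilter X | V ∈ 𝒰} := by
    ext 𝒰
    rw [mem_ofPred_eq, exists_le_nhds_iff_le_nhdsSet hC]
    simp [Filter.le_def]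
  rw [this]
  exact (isClosed_biInter fun V _ => ultrafilter_isClosed_basic V).isCompact

lemma isCompact_limits {X : Type*} [TopologicalSpace X] [T3Space X] {L : Set (Ultrafilter X)}
    (hL : IsCompact L) (hconv : L ⊆ {𝒰 : Ultrafilter X | ∃ x : X, (𝒰 : Filter X) ≤ 𝓝 x}) :
    IsCompact {x : X | ∃ 𝒰 ∈ L, (𝒰 : Filter X) ≤ 𝓝 x} := by
  have hex : ∀ 𝒰 : L, ∃ x : X, ((𝒰 : Ultrafilter X) : Filter X) ≤ 𝓝 x := fun 𝒰 => hconv 𝒰.2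
  choose f hf using hex
  have hcont : Continuous f := by
    rw [continuous_iff_continuousAt]
    intro 𝒰
    -- A closed neighbourhood `V` of the limit contains the limit of every ultrafilter in `βV`.
    refine (closed_nhds_basis (f 𝒰)).tendsto_right_iff.2 fun V ⟨hV, hVc⟩ => ?_
    have hopen : IsOpen {𝒱 : L | V ∈ (𝒱 : Ultrafilter X)} :=
      (ultrafilter_isOpen_basic V).preimage continuous_subtype_val
    filter_upwards [hopen.mem_nhds (hf 𝒰 hV)] with 𝒱 h𝒱
    exact isClosed_iff_ultrafilter.1 hVc _ _ (hf 𝒱) h𝒱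
  have hrange : {x : X | ∃ 𝒰 ∈ L, (𝒰 : Filter X) ≤ 𝓝 x} = range f := by
    ext x
    constructor
    · rintro ⟨𝒰, h𝒰, hx⟩
      exact ⟨⟨𝒰, h𝒰⟩, tendsto_nhds_unique (f := id) (hf ⟨𝒰, h𝒰⟩) hx⟩
    · rintro ⟨𝒰, rfl⟩
      exact ⟨𝒰, 𝒰.2, hf 𝒰⟩
  have : CompactSpace L := isCompact_iff_compactSpace.1 hL
  rw [hrange]
  exact isCompact_range hcont

/-- A regular Hausdorff topological space `X` is hemicompact if and only if the set
of convergent ultrafilters on `X` is hemicompact as a subset of `Ultrafilter X`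
with the Stone topology. -/
theorem hemicompact_iff_convergentUltrafilters_hemicompact
    {X : Type*} [TopologicalSpace X] [T3Space X] :
    (∃ K : ℕ → Set X, (∀ n, IsCompact (K n)) ∧
      ∀ L : Set X, IsCompact L → ∃ n, L ⊆ K n) ↔
    (∃ K : ℕ → Set (Ultrafilter X),
      (∀ n, IsCompact (K n) ∧ K n ⊆ {𝒰 : Ultrafilter X | ∃ x : X, (𝒰 : Filter X) ≤ 𝓝 x}) ∧
      ∀ L : Set (Ultrafilter X), IsCompact L →
        L ⊆ {𝒰 : Ultrafilter X | ∃ x : X, (𝒰 : Filter X) ≤ 𝓝 x} → ∃ n, L ⊆ K n) := by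
  constructor
  · rintro ⟨K, hK, hcof⟩
    refine ⟨fun n => {𝒰 | ∃ x ∈ K n, (𝒰 : Filter X) ≤ 𝓝 x}, fun n =>
      ⟨isCompact_convergentTo (hK n), fun 𝒰 ⟨x, _, hx⟩ => ⟨x, hx⟩⟩, fun L hL hconv => ?_⟩
    obtain ⟨n, hn⟩ := hcof _ (isCompact_limits hL hconv)
    refine ⟨n, fun 𝒰 h𝒰 => ?_⟩
    obtain ⟨x, hx⟩ := hconv h𝒰
    exact ⟨x, hn ⟨𝒰, h𝒰, hx⟩, hx⟩
  · rintro ⟨K, hK, hcof⟩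
    refine ⟨fun n => {x | ∃ 𝒰 ∈ K n, (𝒰 : Filter X) ≤ 𝓝 x}, fun n =>
      isCompact_limits (hK n).1 (hK n).2, fun C hC => ?_⟩
    obtain ⟨n, hn⟩ := hcof _ (isCompact_convergentTo hC) fun 𝒰 ⟨x, _, hx⟩ => ⟨x, hx⟩
    exact ⟨n, fun x hx => ⟨pure x, hn ⟨x, hx, pure_le_nhds x⟩, pure_le_nhds x⟩⟩
end
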